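/- The constraint-readiness problem is undecidable: there exist a set Π of procedures with safe scope and a single acyclic tgd σ such that it is undecidable, given a finite instance I, whether there exists a finite sequence P_1,...,P_n of procedures from Π such that every instance in outcomes_{P_1,...,P_n}(I) satisfies σ. -/

import Mathlib

/-- Domain of values. -/
abbrev Val := ℕ
/-- Variables. -/
abbrev Var := ℕ
/-- Relation names. -/
abbrev RelName := ℕ
/-- A relational instance assigns a set of tuples to each relation name. -/
abbrev Instance := RelName → Set (List Val)

/-- Instance extension (inclusion). -/
def Instance.le (I J : Instance) : Prop := ∀ R, I R ⊆ J R

/-- A relational atom `R(x₁,…,xₖ)`. -/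
structure Atom where
  rel : RelName
  args : List Var

/-- Satisfaction of an atom under an assignment. -/
def holdsAtom (I : Instance) (ν : Var → Val) (a : Atom) : Prop :=
  a.args.map ν ∈ I a.rel

/-- A tuple-generating dependency, given by its body and head conjunctions. -/
structure TGD where
  body : List Atom
  head : List Atom

/-- Variables occurring in the body of a tgd. -/
def TGD.bodyVar (t : TGD) (v : Var) : Prop := ∃ a ∈ t.body, v ∈ a.args

/-- Satisfaction of a tgd: every assignment satisfying the body extends to one
satisfying the head. -/
def satTGD (I : Instance) (t : TGD) : Prop :=
  ∀ ν : Var → Val, (∀ a ∈ t.body, holdsAtom I ν a) →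
    ∃ ν' : Var → Val, (∀ v, t.bodyVar v → ν' v = ν v) ∧ ∀ a ∈ t.head, holdsAtom I ν' a

/-- A full tgd has no existential variables in its head. -/
def FullTGD (t : TGD) : Prop := ∀ a ∈ t.head, ∀ v ∈ a.args, t.bodyVar v

/-- A set of tgds is acyclic: the relation-dependency graph (edge from a body
relation to a head relation) has no cycle, witnessed by a rank function. -/
def AcyclicTGDs (ts : List TGD) : Prop :=
  ∃ rank : RelName → ℕ, ∀ t ∈ ts, ∀ a ∈ t.body, ∀ b ∈ t.head, rank a.rel < rank b.rel

/-- Finiteness of an instance (finitely many facts overall). -/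
def FiniteInst (I : Instance) : Prop := {p : RelName × List Val | p.2 ∈ I p.1}.Finite

/-- Relations appearing in heads of a set of tgds (the scope of a safe-scope procedure). -/
def headRels (ts : List TGD) : Set RelName := { R | ∃ t ∈ ts, ∃ b ∈ t.head, b.rel = R }

/-- Outcomes of applying a procedure with safe scope (identified with its set of
postcondition tgds): extensions of `I` satisfying the tgds, where all relations
outside the scope (the head relations) are unchanged. -/
def safeOutcomes (ts : List TGD) (I : Instance) : Set Instance :=
  { J | Instance.le I J ∧ (∀ t ∈ ts, satTGD J t) ∧ ∀ R, R ∉ headRels ts → I R = J R }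

/-- Outcomes of a sequence of procedures with safe scope. -/
def safeSeqOutcomes : List (List TGD) → Instance → Set Instance
  | [], I => {I}
  | Γ :: rest, I => ⋃ J ∈ safeOutcomes Γ I, safeSeqOutcomes rest J

/-- A boolean conjunctive query: a conjunction of atoms, all variables existential. -/
abbrev BCQ := List Atom

/-- Satisfaction of a boolean conjunctive query. -/
def holdsBCQ (I : Instance) (q : BCQ) : Prop :=
  ∃ ν : Var → Val, ∀ a ∈ q, holdsAtom I ν a

/-- The set of instances represented by a scoped knowledge base `(I, Γ, Scope)`. -/
def repSKB (I : Instance) (Γ : List TGD) (Scope : Set RelName) : Set Instance :=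
  { J | Instance.le I J ∧ (∀ t ∈ Γ, satTGD J t) ∧ ∀ R, R ∉ Scope → I R = J R }

/-- Minimal members of a set of instances. -/
def MinimalIn (S : Set Instance) (J : Instance) : Prop :=
  J ∈ S ∧ ∀ K ∈ S, Instance.le K J → K = J

/-- The set of facts of an instance. -/
def tupleSet (I : Instance) : Set (RelName × List Val) := {p | p.2 ∈ I p.1}

/-- Encoding of finite instances as lists of facts (for computability). -/
abbrev FinInst := List (RelName × List Val)

/-- The instance encoded by a list of facts. -/
def toInstance (L : FinInst) : Instance := fun R => { t | (R, t) ∈ L }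

/-- A conjunctive query with free variables. -/
structure CQuery where
  free : List Var
  body : List Atom

/-- Answers of a conjunctive query over an instance. -/
def answers (q : CQuery) (I : Instance) : Set (List Val) :=
  { l | ∃ ν : Var → Val, (∀ a ∈ q.body, holdsAtom I ν a) ∧ l = q.free.map ν }

/-- A procedure whose pre- and postconditions are tgds, with a scope and
preservation queries. -/
structure Proc where
  scope : Set RelName
  pre : List TGD
  post : List TGD
  pres : List CQuery

/-- Possible outcomes of applying a procedure: the preconditions hold on `I`,
the postconditions hold on the outcome, out-of-scope relations are unchanged
and answers to the preservation queries are preserved. -/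
def procOutcomes (P : Proc) (I : Instance) : Set Instance :=
  { J | (∀ t ∈ P.pre, satTGD I t) ∧ (∀ t ∈ P.post, satTGD J t) ∧
        (∀ R, R ∉ P.scope → I R = J R) ∧ ∀ q ∈ P.pres, answers q I ⊆ answers q J }

namespace CR

/-- A Horn rule holds without changing the assignment. -/
def ClosedT (J : Instance) (t : TGD) : Prop :=
  ∀ ν : Var → Val, (∀ a ∈ t.body, holdsAtom J ν a) → ∀ a ∈ t.head, holdsAtom J ν a

theorem ClosedT.sat {J : Instance} {t : TGD} (h : ClosedT J t) : satTGD J t :=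
  fun ν hb => ⟨ν, fun _ _ => rfl, h ν hb⟩

/-! Relations: 0 `S(x,y)`, 1 `Z(x)`, 2 `Lt(x,y)`, 3 `Pr(a,b,n)`, 4 `Q(k,4k+4)`,
5 `Ev(c,n,m)`, 6 `Start(c)`; the primed copy of `R` is `R + 10`. -/

def rS : TGD := ⟨[⟨0, [0, 1]⟩], [⟨10, [1, 2]⟩]⟩
def rLt0 : TGD := ⟨[⟨0, [0, 1]⟩], [⟨12, [0, 1]⟩]⟩
def rLt1 : TGD := ⟨[⟨2, [0, 1]⟩, ⟨0, [1, 2]⟩], [⟨12, [0, 2]⟩]⟩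
def rPr0 : TGD := ⟨[⟨1, [0]⟩], [⟨13, [0, 0, 0]⟩]⟩
/-- variables: a 0, b 1, n 2, n+1 3, a+1 4 -/
def rPr1 : TGD := ⟨[⟨3, [0, 1, 2]⟩, ⟨0, [2, 3]⟩, ⟨0, [0, 4]⟩, ⟨2, [4, 1]⟩], [⟨13, [4, 1, 3]⟩]⟩
def rPr2 : TGD := ⟨[⟨3, [0, 1, 2]⟩, ⟨0, [2, 3]⟩, ⟨0, [0, 1]⟩, ⟨1, [4]⟩], [⟨13, [1, 4, 3]⟩]⟩
def rPr3 : TGD := ⟨[⟨3, [0, 1, 2]⟩, ⟨0, [2, 3]⟩, ⟨0, [1, 4]⟩, ⟨2, [1, 0]⟩], [⟨13, [0, 4, 3]⟩]⟩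
def rPr4 : TGD := ⟨[⟨3, [0, 0, 2]⟩, ⟨0, [2, 3]⟩, ⟨0, [0, 4]⟩, ⟨1, [1]⟩], [⟨13, [1, 4, 3]⟩]⟩
def rQ0 : TGD := ⟨[⟨1, [0]⟩, ⟨0, [0, 1]⟩, ⟨0, [1, 2]⟩, ⟨0, [2, 3]⟩, ⟨0, [3, 4]⟩], [⟨14, [0, 4]⟩]⟩
def rQ1 : TGD := ⟨[⟨4, [5, 0]⟩, ⟨0, [0, 1]⟩, ⟨0, [1, 2]⟩, ⟨0, [2, 3]⟩, ⟨0, [3, 4]⟩, ⟨0, [5, 6]⟩],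
  [⟨14, [6, 4]⟩]⟩
def rZero : TGD := ⟨[⟨1, [0]⟩, ⟨0, [1, 2]⟩], [⟨15, [0, 1, 0]⟩]⟩
def rSucc : TGD := ⟨[⟨1, [0]⟩, ⟨0, [0, 1]⟩, ⟨0, [2, 3]⟩], [⟨15, [1, 2, 3]⟩]⟩
def rLeft : TGD := ⟨[⟨1, [0]⟩, ⟨0, [0, 1]⟩, ⟨0, [1, 2]⟩, ⟨3, [3, 4, 5]⟩], [⟨15, [2, 5, 3]⟩]⟩
def rRight : TGD :=
  ⟨[⟨1, [0]⟩, ⟨0, [0, 1]⟩, ⟨0, [1, 2]⟩, ⟨0, [2, 6]⟩, ⟨3, [3, 4, 5]⟩], [⟨15, [6, 5, 4]⟩]⟩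
/-- variables: f 0, g 1, k 2, code 3, n 4, a 5, b 6, m 7 -/
def rPair : TGD := ⟨[⟨3, [0, 1, 2]⟩, ⟨4, [2, 3]⟩, ⟨5, [0, 4, 5]⟩, ⟨5, [1, 4, 6]⟩, ⟨3, [5, 6, 7]⟩],
  [⟨15, [3, 4, 7]⟩]⟩
/-- variables: f 0, g 1, k 2, q 3, q+1 4, code 5, n 6, a 7, m 8 -/
def rComp : TGD := ⟨[⟨3, [0, 1, 2]⟩, ⟨4, [2, 3]⟩, ⟨0, [3, 4]⟩, ⟨0, [4, 5]⟩,
  ⟨5, [1, 6, 7]⟩, ⟨5, [0, 7, 8]⟩], [⟨15, [5, 6, 8]⟩]⟩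
/-- variables: f 0, g 1, k 2, q 3, code 4, zero 5, a 6, n 7, m 8 -/
def rPrec0 : TGD := ⟨[⟨3, [0, 1, 2]⟩, ⟨4, [2, 3]⟩, ⟨0, [3, 4]⟩, ⟨1, [5]⟩, ⟨3, [6, 5, 7]⟩,
  ⟨5, [0, 6, 8]⟩], [⟨15, [4, 7, 8]⟩]⟩
/-- variables: f 0, g 1, k 2, q 3, code 4, y 5, y+1 6, a 7, (a,y) 8, (a,y+1) 9, i 10,
(y,i) 11, (a,(y,i)) 12, m 13 -/
def rPrec1 : TGD := ⟨[⟨3, [0, 1, 2]⟩, ⟨4, [2, 3]⟩, ⟨0, [3, 4]⟩, ⟨0, [5, 6]⟩, ⟨3, [7, 5, 8]⟩,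
  ⟨3, [7, 6, 9]⟩, ⟨5, [4, 8, 10]⟩, ⟨3, [5, 10, 11]⟩, ⟨3, [7, 11, 12]⟩, ⟨5, [1, 12, 13]⟩],
  [⟨15, [4, 9, 13]⟩]⟩
/-- variables: f 0, q 1, q+1 2, q+2 3, code 4, zero 5, a 6, m 7, (a,m) 8 -/
def rFind0 : TGD := ⟨[⟨4, [0, 1]⟩, ⟨0, [1, 2]⟩, ⟨0, [2, 3]⟩, ⟨0, [3, 4]⟩, ⟨1, [5]⟩,
  ⟨3, [6, 7, 8]⟩, ⟨5, [0, 8, 5]⟩], [⟨15, [4, 8, 7]⟩]⟩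
/-- variables: f 0, q 1, q+1 2, q+2 3, code 4, j 5, j+1 6, a 7, m 8, m+1 9, (a,m) 10,
(a,m+1) 11, result 12 -/
def rFind1 : TGD := ⟨[⟨4, [0, 1]⟩, ⟨0, [1, 2]⟩, ⟨0, [2, 3]⟩, ⟨0, [3, 4]⟩, ⟨0, [5, 6]⟩,
  ⟨0, [8, 9]⟩, ⟨3, [7, 8, 10]⟩, ⟨3, [7, 9, 11]⟩, ⟨5, [0, 10, 6]⟩, ⟨5, [4, 11, 12]⟩],
  [⟨15, [4, 10, 12]⟩]⟩

def fullRules : List TGD := [rLt0, rLt1, rPr0, rPr1, rPr2, rPr3, rPr4, rQ0, rQ1, rZero, rSucc,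
  rLeft, rRight, rPair, rComp, rPrec0, rPrec1, rFind0, rFind1]

def copy2 (R : ℕ) : TGD := ⟨[⟨R + 10, [0, 1]⟩], [⟨R, [0, 1]⟩]⟩
def copy3 (R : ℕ) : TGD := ⟨[⟨R + 10, [0, 1, 2]⟩], [⟨R, [0, 1, 2]⟩]⟩

def G1 : List TGD := rS :: fullRules
def G2 : List TGD := [copy2 0, copy2 2, copy3 3, copy2 4, copy3 5]
def PiL : List (List TGD) := [G1, G2]
/-- `Start(x), Z(z), Ev(x,z,y)` -/
def sig : TGD := ⟨[], [⟨6, [0]⟩, ⟨1, [1]⟩, ⟨5, [0, 1, 2]⟩]⟩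

theorem acyclic_G1 : AcyclicTGDs G1 := by
  refine ⟨fun R => if R < 10 then 0 else 1, ?_⟩
  simp [G1, fullRules, rS, rLt0, rLt1, rPr0, rPr1, rPr2, rPr3, rPr4, rQ0, rQ1, rZero, rSucc,
    rLeft, rRight, rPair, rComp, rPrec0, rPrec1, rFind0, rFind1]

theorem acyclic_G2 : AcyclicTGDs G2 := by
  refine ⟨fun R => if R < 10 then 1 else 0, ?_⟩
  simp [G2, copy2, copy3]

theorem full_rules : ∀ t ∈ fullRules, FullTGD t := by
  simp [FullTGD, TGD.bodyVar, fullRules, rLt0, rLt1, rPr0, rPr1, rPr2, rPr3, rPr4, rQ0, rQ1,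
    rZero, rSucc, rLeft, rRight, rPair, rComp, rPrec0, rPrec1, rFind0, rFind1]

theorem full_copy : ∀ t ∈ G2, FullTGD t := by
  simp [FullTGD, TGD.bodyVar, G2, copy2, copy3]

/-! ### Soundness -/

theorem Instance.le_refl' (I : Instance) : Instance.le I I := fun _ => subset_rfl
theorem le_trans' {I J K : Instance} (h : Instance.le I J) (h' : Instance.le J K) :
    Instance.le I K := fun R => (h R).trans (h' R)

theorem exists_outcome {M I : Instance} {Γ : List TGD} (hM : ∀ t ∈ Γ, satTGD M t)
    (hI : Instance.le I M) : ∃ J ∈ safeOutcomes Γ I, Instance.le J M := by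
  classical
  let J : Instance := fun R => if R ∈ headRels Γ then M R else I R
  have hJM : Instance.le J M := by
    intro R
    by_cases h : R ∈ headRels Γ
    · simp [J, h]
    · simpa [J, h] using hI R
  refine ⟨J, ⟨?_, ?_, ?_⟩, hJM⟩
  · intro R
    by_cases h : R ∈ headRels Γ
    · simpa [J, h] using hI R
    · simp [J, h]
  · intro t ht ν hb
    obtain ⟨ν', h1, h2⟩ := hM t ht ν (fun a ha => hJM _ (hb a ha))
    refine ⟨ν', h1, fun a ha => ?_⟩
    have : a.rel ∈ headRels Γ := ⟨t, ht, a, ha, rfl⟩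
    have h3 := h2 a ha
    simpa [holdsAtom, J, this] using h3
  · intro R h
    simp [J, h]

theorem exists_seq_outcome {M : Instance} {P : List (List TGD)}
    (hM : ∀ Γ ∈ P, ∀ t ∈ Γ, satTGD M t) (seq : List (List TGD)) (hs : ∀ Γ ∈ seq, Γ ∈ P) :
    ∀ I, Instance.le I M → ∃ J ∈ safeSeqOutcomes seq I, Instance.le J M := by
  induction seq with
  | nil => intro I hI; exact ⟨I, rfl, hI⟩
  | cons Γ rest ih =>
    intro I hI
    obtain ⟨J, hJ, hJM⟩ := exists_outcome (hM Γ (hs Γ (by simp))) hI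
    obtain ⟨K, hK, hKM⟩ := ih (fun Γ h => hs Γ (by simp [h])) J hJM
    exact ⟨K, by simp only [safeSeqOutcomes, Set.mem_iUnion]; exact ⟨J, hJ, hK⟩, hKM⟩

open Nat.Partrec

/-- The intended model. -/
def model (c : ℕ) : Instance := fun R =>
  if R = 0 ∨ R = 10 then {t | ∃ x, t = [x, x + 1]}
  else if R = 1 then {[0]}
  else if R = 2 ∨ R = 12 then {t | ∃ x y, x < y ∧ t = [x, y]}
  else if R = 3 ∨ R = 13 then {t | ∃ x y, t = [x, y, Nat.pair x y]}
  else if R = 4 ∨ R = 14 then {t | ∃ x, t = [x, 4 * x + 4]}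
  else if R = 5 ∨ R = 15 then {t | ∃ e n m, m ∈ Code.eval (Code.ofNatCode e) n ∧ t = [e, n, m]}
  else if R = 6 then {[c]} else ∅

theorem exists_code (f : ℕ) : ∃ cf : Code, f = Code.encodeCode cf :=
  ⟨Denumerable.ofNat Code f, (Denumerable.encode_ofNat (α := Code) f).symm⟩
theorem ofNat_encodeCode (c : Code) : Code.ofNatCode (Code.encodeCode c) = c :=
  Denumerable.ofNat_encode (α := Code) c

theorem enc_pair (f g : Code) : Code.encodeCode (Code.pair f g) =
    4 * Nat.pair (Code.encodeCode f) (Code.encodeCode g) + 4 := by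
  rw [Code.encodeCode]; ring
theorem enc_prec (f g : Code) : Code.encodeCode (Code.prec f g) =
    4 * Nat.pair (Code.encodeCode f) (Code.encodeCode g) + 4 + 1 := by
  rw [Code.encodeCode]; ring
theorem enc_comp (f g : Code) : Code.encodeCode (Code.comp f g) =
    4 * Nat.pair (Code.encodeCode f) (Code.encodeCode g) + 4 + 1 + 1 := by
  rw [Code.encodeCode]; ring
theorem enc_rfind (f : Code) : Code.encodeCode (Code.rfind' f) =
    4 * Code.encodeCode f + 4 + 1 + 1 + 1 := by
  rw [Code.encodeCode]; ring

theorem ofNat_pair (f g : ℕ) : Code.ofNatCode (4 * Nat.pair f g + 4) =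
    Code.pair (Code.ofNatCode f) (Code.ofNatCode g) := by
  obtain ⟨f, rfl⟩ := exists_code f
  obtain ⟨g, rfl⟩ := exists_code g
  rw [← enc_pair]; simp only [ofNat_encodeCode]
theorem ofNat_prec (f g : ℕ) : Code.ofNatCode (4 * Nat.pair f g + 4 + 1) =
    Code.prec (Code.ofNatCode f) (Code.ofNatCode g) := by
  obtain ⟨f, rfl⟩ := exists_code f
  obtain ⟨g, rfl⟩ := exists_code g
  rw [← enc_prec]; simp only [ofNat_encodeCode]
theorem ofNat_comp (f g : ℕ) : Code.ofNatCode (4 * Nat.pair f g + 4 + 1 + 1) =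
    Code.comp (Code.ofNatCode f) (Code.ofNatCode g) := by
  obtain ⟨f, rfl⟩ := exists_code f
  obtain ⟨g, rfl⟩ := exists_code g
  rw [← enc_comp]; simp only [ofNat_encodeCode]
theorem ofNat_rfind (f : ℕ) : Code.ofNatCode (4 * f + 4 + 1 + 1 + 1) =
    Code.rfind' (Code.ofNatCode f) := by
  obtain ⟨f, rfl⟩ := exists_code f
  rw [← enc_rfind]; simp only [ofNat_encodeCode]
theorem ofNat_zero : Code.ofNatCode 0 = Code.zero := ofNat_encodeCode Code.zero
theorem ofNat_succ : Code.ofNatCode (0 + 1) = Code.succ := ofNat_encodeCode Code.succ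
theorem ofNat_left : Code.ofNatCode (0 + 1 + 1) = Code.left := ofNat_encodeCode Code.left
theorem ofNat_right : Code.ofNatCode (0 + 1 + 1 + 1) = Code.right := ofNat_encodeCode Code.right

theorem mem_eval_pair {f g : Code} {n m : ℕ} : m ∈ (Code.pair f g).eval n ↔
    ∃ a ∈ f.eval n, ∃ b ∈ g.eval n, m = Nat.pair a b := by
  simp [Code.eval, Seq.seq, eq_comm]

theorem pair_step1 {a b : ℕ} (h : a + 1 < b) : Nat.pair (a + 1) b = Nat.pair a b + 1 := by
  have h' : a < b := by omega
  simp [Nat.pair, h, h']; ring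
theorem pair_step2 (a : ℕ) : Nat.pair (a + 1) 0 = Nat.pair a (a + 1) + 1 := by
  simp [Nat.pair]; ring
theorem pair_step3 {a b : ℕ} (h : b < a) : Nat.pair a (b + 1) = Nat.pair a b + 1 := by
  have h' : ¬ a < b := by omega
  have h'' : ¬ a < b + 1 := by omega
  simp [Nat.pair, h', h'']; ring
theorem pair_step4 (a : ℕ) : Nat.pair 0 (a + 1) = Nat.pair a a + 1 := by
  simp [Nat.pair]; ring

theorem rfind_zero {f : Code} {a m : ℕ} (h : 0 ∈ f.eval (Nat.pair a m)) :
    m ∈ (Code.rfind' f).eval (Nat.pair a m) := by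
  simp only [Code.eval, Nat.unpaired, Nat.unpair_pair]
  refine (Part.mem_map_iff _).2 ⟨0, Nat.mem_rfind.2 ⟨?_, by simp⟩, by simp⟩
  simpa using h

theorem rfind_succ {f : Code} {a m j r : ℕ} (h : j + 1 ∈ f.eval (Nat.pair a m))
    (hr : r ∈ (Code.rfind' f).eval (Nat.pair a (m + 1))) :
    r ∈ (Code.rfind' f).eval (Nat.pair a m) := by
  simp only [Code.eval, Nat.unpaired, Nat.unpair_pair] at hr ⊢
  obtain ⟨k, hk, rfl⟩ := (Part.mem_map_iff _).1 hr
  obtain ⟨h1, h2⟩ := Nat.mem_rfind.1 hk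
  refine (Part.mem_map_iff _).2 ⟨k + 1, Nat.mem_rfind.2 ⟨?_, ?_⟩, by ring⟩
  · rw [show k + 1 + m = k + (m + 1) by ring]; exact h1
  · intro i hi
    rcases i with _ | i
    · exact (Part.mem_map_iff _).2 ⟨j + 1, by simpa using h, by simp⟩
    · rw [show i + 1 + m = i + (m + 1) by ring]; exact h2 (by omega)

theorem ar1 {x y : ℕ} : y = x + 1 → x < y := by omega
theorem ar2 {x y z : ℕ} : x < y → z = y + 1 → x < z := by omega
theorem ar3 {a b c d e : ℕ} :
    a = 0 → b = a + 1 → c = b + 1 → d = c + 1 → e = d + 1 → e = 4 * a + 4 := by omega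
theorem ar4 {a b c d e k l : ℕ} : a = 4 * k + 4 → b = a + 1 → c = b + 1 → d = c + 1 →
    e = d + 1 → l = k + 1 → e = 4 * l + 4 := by omega

theorem model_full (c : ℕ) : ∀ t ∈ fullRules, ClosedT (model c) t := by
  simp only [fullRules, List.forall_mem_cons, List.not_mem_nil, false_imp_iff, implies_true,
    and_true]
  refine ⟨?_, ?_, ?_, ?_, ?_, ?_, ?_, ?_, ?_, ?_, ?_, ?_, ?_, ?_, ?_, ?_, ?_, ?_, ?_⟩ <;>
    intro (ν : ℕ → ℕ) <;>
    simp [rLt0, rLt1, rPr0, rPr1, rPr2, rPr3, rPr4, rQ0, rQ1,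
      rZero, rSucc, rLeft, rRight, rPair, rComp, rPrec0, rPrec1, rFind0, rFind1, holdsAtom, model]
  · exact ar1
  · exact ar2
  · intro h; rw [h]; rfl
  · intro h1 h2 h3 h4; rw [h2, h1, h3, pair_step1 (h3 ▸ h4)]
  · intro h1 h2 h3 h4; rw [h2, h1, h3, h4, pair_step2]
  · intro h1 h2 h3 h4; rw [h2, h1, h3, pair_step3 h4]
  · intro h1 h2 h3 h4; rw [h2, h1, h3, h4, pair_step4]
  · exact ar3
  · exact ar4
  · intro h1 h2; rw [h1, ofNat_zero]; exact Part.mem_some 0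
  · intro h1 h2 h3; rw [h2, h1, ofNat_succ, h3]; exact Part.mem_some _
  · intro h1 h2 h3 h4; rw [h3, h2, h1, ofNat_left, h4]; simp [Code.eval]
  · intro h1 h2 h3 h4 h5; rw [h4, h3, h2, h1, ofNat_right, h5]; simp [Code.eval]
  · intro h1 h2 h3 h4 h5
    rw [h2, h1, ofNat_pair, mem_eval_pair]
    exact ⟨_, h3, _, h4, h5⟩
  · intro h1 h2 h3 h4 h5 h6
    rw [h4, h3, h2, h1, ofNat_comp]
    exact Part.mem_bind h5 h6
  · intro h1 h2 h3 h4 h5 h6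
    rw [h3, h2, h1, h5, h4, ofNat_prec, Code.eval_prec_zero]
    exact h6
  · intro h1 h2 h3 h4 h5 h6 h7 h8 h9 h10
    rw [h3, h2, h1, ofNat_prec] at h7 ⊢
    rw [h6, h4, Code.eval_prec_succ]
    rw [h5] at h7
    rw [h9, h8] at h10
    exact Part.mem_bind h7 h10
  · intro h1 h2 h3 h4 h5 h6 h7
    rw [h4, h3, h2, h1, ofNat_rfind, h6]
    rw [h5, h6] at h7
    exact rfind_zero h7
  · intro h1 h2 h3 h4 h5 h6 h7 h8 h9 h10
    rw [h4, h3, h2, h1, ofNat_rfind] at h10 ⊢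
    rw [h7]
    rw [h5, h7] at h9
    rw [h8, h6] at h10
    exact rfind_succ h9 h10

theorem model_sat (c : ℕ) : ∀ Γ ∈ PiL, ∀ t ∈ Γ, satTGD (model c) t := by
  simp only [PiL, List.forall_mem_cons, List.not_mem_nil, false_imp_iff, implies_true,
    and_true, G1]
  refine ⟨⟨?_, fun t ht => (model_full c t ht).sat⟩, fun t ht => ClosedT.sat ?_⟩
  · intro ν _
    refine ⟨fun i => if i = 2 then ν 1 + 1 else ν i, ?_, ?_⟩
    · intro v hv
      have : v ≠ 2 := by
        rintro rfl
        simp [TGD.bodyVar, rS] at hv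
      simp [this]
    · simp [rS, holdsAtom, model]
  · intro ν
    revert t
    simp [G2, copy2, copy3, holdsAtom, model]

/-! ### Completeness -/

/-- `J` is reachable from `I` by `n` rounds. -/
def Reach : ℕ → Instance → Instance → Prop
  | 0, I, J => J = I
  | n + 1, I, J => ∃ J1 J2, Reach n I J1 ∧ J2 ∈ safeOutcomes G1 J1 ∧ J ∈ safeOutcomes G2 J2

theorem Reach.split {I J : Instance} {m n : ℕ} (h : Reach (m + n) I J) :
    ∃ K, Reach m I K ∧ Reach n K J := by
  induction n generalizing J with
  | zero => exact ⟨J, h, rfl⟩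
  | succ n ih =>
    obtain ⟨J1, J2, h1, h2, h3⟩ := h
    obtain ⟨K, hK, hK'⟩ := ih h1
    exact ⟨K, hK, J1, J2, hK', h2, h3⟩

theorem Reach.le {I J : Instance} {n : ℕ} (h : Reach n I J) : Instance.le I J := by
  induction n generalizing J with
  | zero => rw [Reach] at h; subst h; exact Instance.le_refl' _
  | succ n ih =>
    obtain ⟨J1, J2, h1, h2, h3⟩ := h
    exact le_trans' (ih h1) (le_trans' h2.1 h3.1)

theorem Reach.mono {I J : Instance} {m n : ℕ} (hmn : m ≤ n) (h : Reach n I J) :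
    ∃ K, Reach m I K ∧ Instance.le K J := by
  obtain ⟨k, rfl⟩ := Nat.exists_eq_add_of_le hmn
  obtain ⟨K, h1, h2⟩ := h.split
  exact ⟨K, h1, h2.le⟩

def rounds : ℕ → List (List TGD)
  | 0 => []
  | n + 1 => rounds n ++ PiL

theorem rounds_mem (n : ℕ) : ∀ Γ ∈ rounds n, Γ ∈ PiL := by
  induction n with
  | zero => simp [rounds]
  | succ n ih =>
    intro Γ h
    rcases List.mem_append.1 h with h | h
    · exact ih Γ h
    · exact h

theorem seq_append (s t : List (List TGD)) (I J : Instance) (h : J ∈ safeSeqOutcomes (s ++ t) I) :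
    ∃ K ∈ safeSeqOutcomes s I, J ∈ safeSeqOutcomes t K := by
  induction s generalizing I with
  | nil => exact ⟨I, rfl, h⟩
  | cons Γ s ih =>
    simp only [List.cons_append, safeSeqOutcomes, Set.mem_iUnion] at h
    obtain ⟨J1, h1, h2⟩ := h
    obtain ⟨K, hK, hK'⟩ := ih J1 h2
    refine ⟨K, ?_, hK'⟩
    simp only [safeSeqOutcomes, Set.mem_iUnion]
    exact ⟨J1, h1, hK⟩

theorem rounds_reach (n : ℕ) (I J : Instance) (h : J ∈ safeSeqOutcomes (rounds n) I) :
    Reach n I J := by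
  induction n generalizing J with
  | zero => exact h
  | succ n ih =>
    obtain ⟨K, hK, hJ⟩ := seq_append _ _ _ _ h
    simp only [PiL, safeSeqOutcomes, Set.mem_iUnion] at hJ
    obtain ⟨J2, h2, J3, h3, h4⟩ := hJ
    have : J = J3 := h4
    subst this
    exact ⟨K, J2, ih K hK, h2, h3⟩

/-- A successor chain of length `n` in `J`, starting at zero, with start code at position `c`. -/
def Chain (c n : ℕ) (h : ℕ → ℕ) (J : Instance) : Prop :=
  [h 0] ∈ J 1 ∧ [h c] ∈ J 6 ∧ ∀ i < n, [h i, h (i + 1)] ∈ J 0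

theorem Chain.mono {c m n : ℕ} {h : ℕ → ℕ} {J : Instance} (hc : Chain c n h J) (hmn : m ≤ n) :
    Chain c m h J := ⟨hc.1, hc.2.1, fun i hi => hc.2.2 i (by omega)⟩

/-- The facts about numbers which are eventually derived. -/
def derived (c : ℕ) : Instance := fun R =>
  {t | ∃ n, ∀ J0 h, Chain c n h J0 → ∀ J, Reach n J0 J → t.map h ∈ J R}

theorem common_bound {c : ℕ} {ν : Var → Val} (l : List Atom)
    (hl : ∀ a ∈ l, holdsAtom (derived c) ν a) :
    ∃ n, ∀ J0 h, Chain c n h J0 → ∀ J, Reach n J0 J →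
      ∀ a ∈ l, holdsAtom J (fun v => h (ν v)) a := by
  induction l with
  | nil => exact ⟨0, by simp⟩
  | cons a l ih =>
    obtain ⟨n1, h1⟩ := ih (fun b hb => hl b (by simp [hb]))
    obtain ⟨n2, h2⟩ := hl a (by simp)
    refine ⟨max n1 n2, fun J0 h hc J hJ b hb => ?_⟩
    rcases List.mem_cons.1 hb with rfl | hb
    · obtain ⟨K, hK, hKJ⟩ := hJ.mono (le_max_right n1 n2)
      have := hKJ _ (h2 J0 h (hc.mono (le_max_right _ _)) K hK)
      simpa [holdsAtom, List.map_map, Function.comp_def] using this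
    · obtain ⟨K, hK, hKJ⟩ := hJ.mono (le_max_left n1 n2)
      exact hKJ _ (h1 J0 h (hc.mono (le_max_left _ _)) K hK b hb)

theorem fire {J : Instance} {t : TGD} (hf : FullTGD t) (hs : satTGD J t) : ClosedT J t := by
  intro ν hb a ha
  obtain ⟨ν', h1, h2⟩ := hs ν hb
  have h3 := h2 a ha
  have : a.args.map ν' = a.args.map ν := List.map_congr_left fun v hv => h1 v (hf a ha v hv)
  rw [holdsAtom, this] at h3
  exact h3

theorem derived_closed (c : ℕ) (t : TGD) (ht : t ∈ fullRules ∨ t ∈ G2) :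
    ClosedT (derived c) t := by
  intro ν hb a ha
  obtain ⟨n, hn⟩ := common_bound _ hb
  refine ⟨n + 1, fun J0 h hc J hJ => ?_⟩
  obtain ⟨J1, J2, h1, h2, h3⟩ := hJ
  have hb1 := hn J0 h (hc.mono (by omega)) J1 h1
  have key : holdsAtom J (fun v => h (ν v)) a := by
    rcases ht with ht | ht
    · exact h3.1 _ (fire (full_rules t ht) (h2.2.1 t (List.mem_cons_of_mem _ ht)) _
        (fun b hb => h2.1 _ (hb1 b hb)) a ha)
    · exact fire (full_copy t ht) (h3.2.1 t ht) _
        (fun b hb => h3.1 _ (h2.1 _ (hb1 b hb))) a ha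
  simpa [holdsAtom, List.map_map, Function.comp_def] using key

theorem d_S (c i : ℕ) : [i, i + 1] ∈ derived c 0 :=
  ⟨i + 1, fun J0 h hc J hJ => hJ.le _ (by simpa using hc.2.2 i (by omega))⟩

theorem d_Z (c : ℕ) : [0] ∈ derived c 1 :=
  ⟨0, fun J0 h hc J hJ => hJ.le _ (by simpa using hc.1)⟩

/-- Assignment from a list. -/
def asg (l : List ℕ) : Var → Val := fun i => l.getD i 0

theorem d_copy2 {c : ℕ} (R : ℕ) (hR : copy2 R ∈ G2) {x y : ℕ}
    (h : [x, y] ∈ derived c (R + 10)) : [x, y] ∈ derived c R := by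
  have := derived_closed c _ (Or.inr hR) (asg [x, y])
  simpa [copy2, holdsAtom, asg, h] using this

theorem d_copy3 {c : ℕ} (R : ℕ) (hR : copy3 R ∈ G2) {x y z : ℕ}
    (h : [x, y, z] ∈ derived c (R + 10)) : [x, y, z] ∈ derived c R := by
  have := derived_closed c _ (Or.inr hR) (asg [x, y, z])
  simpa [copy3, holdsAtom, asg, h] using this

theorem d_Lt (c : ℕ) {x y : ℕ} (h : x < y) : [x, y] ∈ derived c 2 := by
  obtain ⟨k, rfl⟩ := Nat.exists_eq_add_of_lt h
  clear h
  induction k with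
  | zero =>
    refine d_copy2 2 (by simp [G2]) ?_
    have := derived_closed c rLt0 (Or.inl (by simp [fullRules])) (asg [x, x + 1])
    simpa [rLt0, holdsAtom, asg, d_S] using this
  | succ k ih =>
    refine d_copy2 2 (by simp [G2]) ?_
    have := derived_closed c rLt1 (Or.inl (by simp [fullRules]))
      (asg [x, x + k + 1, x + k + 1 + 1])
    rw [← add_assoc]
    simpa [rLt1, holdsAtom, asg, d_S, ih] using this

theorem d_Pr_aux (c n : ℕ) : ∀ a b, Nat.pair a b = n → [a, b, n] ∈ derived c 3 := by
  induction n with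
  | zero =>
    intro a b hab
    have h0 : a = 0 ∧ b = 0 := Nat.pair_eq_pair.1 (hab.trans (by rfl : 0 = Nat.pair 0 0))
    obtain ⟨rfl, rfl⟩ := h0
    refine d_copy3 3 (by simp [G2]) ?_
    have := derived_closed c rPr0 (Or.inl (by simp [fullRules])) (asg [0])
    simpa [rPr0, holdsAtom, asg, d_Z] using this
  | succ n ih =>
    intro a b hab
    refine d_copy3 3 (by simp [G2]) ?_
    rcases lt_or_ge a b with h | h
    · rcases a with _ | a
      · obtain ⟨b, rfl⟩ := Nat.exists_eq_succ_of_ne_zero (by omega : b ≠ 0)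
        have h' := ih b b (by have := pair_step4 b; simp only [Nat.succ_eq_add_one] at hab; omega)
        have := derived_closed c rPr4 (Or.inl (by simp [fullRules])) (asg [b, 0, n, n + 1, b + 1])
        simpa [rPr4, holdsAtom, asg, d_Z, d_S, h'] using this
      · have h' := ih a b (by have := pair_step1 h; omega)
        have := derived_closed c rPr1 (Or.inl (by simp [fullRules])) (asg [a, b, n, n + 1, a + 1])
        simpa [rPr1, holdsAtom, asg, d_S, h', d_Lt c h] using this
    · rcases b with _ | b
      · rcases a with _ | a
        · simp [Nat.pair] at hab
        · have h' := ih a (a + 1) (by have := pair_step2 a; omega)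
          have := derived_closed c rPr2 (Or.inl (by simp [fullRules]))
            (asg [a, a + 1, n, n + 1, 0])
          simpa [rPr2, holdsAtom, asg, d_S, d_Z, h'] using this
      · have hlt : b < a := by omega
        have h' := ih a b (by have := pair_step3 hlt; omega)
        have := derived_closed c rPr3 (Or.inl (by simp [fullRules])) (asg [a, b, n, n + 1, b + 1])
        simpa [rPr3, holdsAtom, asg, d_S, h', d_Lt c hlt] using this

theorem d_Pr (c a b : ℕ) : [a, b, Nat.pair a b] ∈ derived c 3 := d_Pr_aux c _ a b rfl

theorem d_Q (c k : ℕ) : [k, 4 * k + 4] ∈ derived c 4 := by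
  induction k with
  | zero =>
    refine d_copy2 4 (by simp [G2]) ?_
    have := derived_closed c rQ0 (Or.inl (by simp [fullRules]))
      (asg [0, 0 + 1, 0 + 1 + 1, 0 + 1 + 1 + 1, 0 + 1 + 1 + 1 + 1])
    have s1 := d_S c 0
    have s2 := d_S c 1
    have s3 := d_S c 2
    have s4 := d_S c 3
    norm_num at s1 s2 s3 s4
    simpa [rQ0, holdsAtom, asg, d_Z, s1, s2, s3, s4] using this
  | succ k ih =>
    refine d_copy2 4 (by simp [G2]) ?_
    have := derived_closed c rQ1 (Or.inl (by simp [fullRules]))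
      (asg [4 * k + 4, 4 * k + 5, 4 * k + 6, 4 * k + 7, 4 * k + 8, k, k + 1])
    have s1 := d_S c (4 * k + 4)
    have s2 := d_S c (4 * k + 5)
    have s3 := d_S c (4 * k + 6)
    have s4 := d_S c (4 * k + 7)
    rw [show 4 * (k + 1) + 4 = 4 * k + 8 by ring]
    simpa [rQ1, holdsAtom, asg, d_S, s1, s2, s3, s4, ih] using this

theorem d_eval (c : ℕ) (e : Code) : ∀ n m, m ∈ e.eval n →
    [Code.encodeCode e, n, m] ∈ derived c 5 := by
  induction e with
  | zero =>
    intro n m h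
    have hm : m = 0 := by simpa [Code.eval, pure, PFun.pure] using h
    subst hm
    refine d_copy3 5 (by simp [G2]) ?_
    have := derived_closed c rZero (Or.inl (by simp [fullRules])) (asg [0, n, n + 1])
    simpa [rZero, holdsAtom, asg, d_Z, d_S, Code.encodeCode] using this
  | succ =>
    intro n m h
    have hm : m = n + 1 := by simpa [Code.eval] using h
    subst hm
    refine d_copy3 5 (by simp [G2]) ?_
    have := derived_closed c rSucc (Or.inl (by simp [fullRules])) (asg [0, 1, n, n + 1])
    have s1 := d_S c 0
    norm_num at s1
    simpa [rSucc, holdsAtom, asg, d_Z, d_S, s1, Code.encodeCode] using this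
  | left =>
    intro n m h
    have hm : m = n.unpair.1 := by simpa [Code.eval] using h
    subst hm
    refine d_copy3 5 (by simp [G2]) ?_
    have := derived_closed c rLeft (Or.inl (by simp [fullRules]))
      (asg [0, 1, 2, n.unpair.1, n.unpair.2, n])
    have s1 := d_S c 0
    have s2 := d_S c 1
    have s3 := d_Pr c n.unpair.1 n.unpair.2
    norm_num at s1 s2
    rw [Nat.pair_unpair] at s3
    simpa [rLeft, holdsAtom, asg, d_Z, s1, s2, s3, Code.encodeCode] using this
  | right =>
    intro n m h
    have hm : m = n.unpair.2 := by simpa [Code.eval] using h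
    subst hm
    refine d_copy3 5 (by simp [G2]) ?_
    have := derived_closed c rRight (Or.inl (by simp [fullRules]))
      (asg [0, 1, 2, n.unpair.1, n.unpair.2, n, 3])
    have s1 := d_S c 0
    have s2 := d_S c 1
    have s4 := d_S c 2
    have s3 := d_Pr c n.unpair.1 n.unpair.2
    norm_num at s1 s2 s4
    rw [Nat.pair_unpair] at s3
    simpa [rRight, holdsAtom, asg, d_Z, s1, s2, s3, s4, Code.encodeCode] using this
  | pair f g hf hg =>
    intro n m h
    obtain ⟨a, ha, b, hb, rfl⟩ := mem_eval_pair.1 h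
    refine d_copy3 5 (by simp [G2]) ?_
    rw [enc_pair]
    have := derived_closed c rPair (Or.inl (by simp [fullRules]))
      (asg [f.encodeCode, g.encodeCode, Nat.pair f.encodeCode g.encodeCode,
        4 * Nat.pair f.encodeCode g.encodeCode + 4, n, a, b, Nat.pair a b])
    simpa [rPair, holdsAtom, asg, d_Q, d_Pr, hf _ _ ha, hg _ _ hb] using this
  | comp f g hf hg =>
    intro n m h
    obtain ⟨a, ha, hb⟩ := Part.mem_bind_iff.1 h
    refine d_copy3 5 (by simp [G2]) ?_
    rw [enc_comp]
    have s1 := d_S c (4 * Nat.pair f.encodeCode g.encodeCode + 4)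
    have s2 := d_S c (4 * Nat.pair f.encodeCode g.encodeCode + 4 + 1)
    have := derived_closed c rComp (Or.inl (by simp [fullRules]))
      (asg [f.encodeCode, g.encodeCode, Nat.pair f.encodeCode g.encodeCode,
        4 * Nat.pair f.encodeCode g.encodeCode + 4,
        4 * Nat.pair f.encodeCode g.encodeCode + 4 + 1,
        4 * Nat.pair f.encodeCode g.encodeCode + 4 + 1 + 1, n, a, m])
    simpa [rComp, holdsAtom, asg, d_Q, d_Pr, s1, s2, hf _ _ hb, hg _ _ ha] using this
  | prec f g hf hg =>
    intro n
    obtain ⟨a, k, rfl⟩ : ∃ a k, n = Nat.pair a k := ⟨_, _, (Nat.pair_unpair n).symm⟩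
    have s1 := d_S c (4 * Nat.pair f.encodeCode g.encodeCode + 4)
    induction k with
    | zero =>
      intro m h
      rw [Code.eval_prec_zero] at h
      refine d_copy3 5 (by simp [G2]) ?_
      rw [enc_prec]
      have := derived_closed c rPrec0 (Or.inl (by simp [fullRules]))
        (asg [f.encodeCode, g.encodeCode, Nat.pair f.encodeCode g.encodeCode,
          4 * Nat.pair f.encodeCode g.encodeCode + 4,
          4 * Nat.pair f.encodeCode g.encodeCode + 4 + 1, 0, a, Nat.pair a 0, m])
      simpa [rPrec0, holdsAtom, asg, d_Q, d_Pr, d_Z, s1, hf _ _ h] using this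
    | succ k ih =>
      intro m h
      rw [← Nat.succ_eq_add_one, Code.eval_prec_succ] at h
      obtain ⟨i, hi, hm⟩ := Part.mem_bind_iff.1 h
      have h1 := ih i hi
      refine d_copy3 5 (by simp [G2]) ?_
      rw [enc_prec] at h1 ⊢
      have := derived_closed c rPrec1 (Or.inl (by simp [fullRules]))
        (asg [f.encodeCode, g.encodeCode, Nat.pair f.encodeCode g.encodeCode,
          4 * Nat.pair f.encodeCode g.encodeCode + 4,
          4 * Nat.pair f.encodeCode g.encodeCode + 4 + 1, k, k + 1, a, Nat.pair a k,
          Nat.pair a (k + 1), i, Nat.pair k i, Nat.pair a (Nat.pair k i), m])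
      simpa [rPrec1, holdsAtom, asg, d_Q, d_Pr, d_S, s1, h1, hg _ _ hm] using this
  | rfind' f hf =>
    intro n m h
    obtain ⟨a, k, rfl⟩ : ∃ a k, n = Nat.pair a k := ⟨_, _, (Nat.pair_unpair n).symm⟩
    simp only [Code.eval, Nat.unpaired, Nat.unpair_pair] at h
    obtain ⟨j, hj, rfl⟩ := (Part.mem_map_iff _).1 h
    obtain ⟨h1, h2⟩ := Nat.mem_rfind.1 hj
    obtain ⟨v, hv, hv0⟩ := (Part.mem_map_iff _).1 h1
    have hv0 : v = 0 := by simpa using hv0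
    subst hv0
    have h3 : ∀ i < j, ∃ w, w + 1 ∈ f.eval (Nat.pair a (i + k)) := by
      intro i hi
      obtain ⟨w, hw, hw0⟩ := (Part.mem_map_iff _).1 (h2 hi)
      have hw0 : w ≠ 0 := by simpa using hw0
      exact ⟨w - 1, by rwa [Nat.sub_add_cancel (by omega)]⟩
    have s1 := d_S c (4 * f.encodeCode + 4)
    have s2 := d_S c (4 * f.encodeCode + 4 + 1)
    have s3 := d_S c (4 * f.encodeCode + 4 + 1 + 1)
    clear h hj h1 h2
    rw [enc_rfind]
    induction j generalizing k with
    | zero =>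
      rw [zero_add] at hv ⊢
      refine d_copy3 5 (by simp [G2]) ?_
      have := derived_closed c rFind0 (Or.inl (by simp [fullRules]))
        (asg [f.encodeCode, 4 * f.encodeCode + 4, 4 * f.encodeCode + 4 + 1,
          4 * f.encodeCode + 4 + 1 + 1, 4 * f.encodeCode + 4 + 1 + 1 + 1, 0, a, k, Nat.pair a k])
      simpa [rFind0, holdsAtom, asg, d_Q, d_Pr, d_Z, s1, s2, s3, hf _ _ hv] using this
    | succ j ih =>
      have e1 : ∀ i, i + 1 + k = i + (k + 1) := fun i => by ring
      have h4 := ih (k + 1) (by rwa [← e1]) (fun i hi => by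
        rw [← e1]; exact h3 (i + 1) (by omega))
      obtain ⟨w, hw⟩ := h3 0 (by omega)
      rw [zero_add] at hw
      rw [e1]
      refine d_copy3 5 (by simp [G2]) ?_
      have := derived_closed c rFind1 (Or.inl (by simp [fullRules]))
        (asg [f.encodeCode, 4 * f.encodeCode + 4, 4 * f.encodeCode + 4 + 1,
          4 * f.encodeCode + 4 + 1 + 1, 4 * f.encodeCode + 4 + 1 + 1 + 1, w, w + 1, a, k, k + 1,
          Nat.pair a k, Nat.pair a (k + 1), j + (k + 1)])
      simpa [rFind1, holdsAtom, asg, d_Q, d_Pr, d_S, s1, s2, s3, hf _ _ hw, h4] using this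

/-- The input instance for code number `k`. -/
def input (k : ℕ) : FinInst :=
  (6, [k]) :: (1, [0]) :: (List.range (k + 1)).map (fun i => (0, [i, i + 1]))

theorem input_le_model (k : ℕ) : Instance.le (toInstance (input k)) (model k) := by
  intro R t h
  simp only [toInstance, input, Set.mem_ofPred_eq, List.mem_cons, List.mem_map, Prod.mk.injEq] at h
  rcases h with ⟨rfl, rfl⟩ | ⟨rfl, rfl⟩ | ⟨i, _, rfl, rfl⟩ <;> simp [model]

theorem chain_exists (k n : ℕ) (J : Instance) (hJ : Reach n (toInstance (input k)) J) :
    ∃ h, Chain k (k + 1 + n) h J := by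
  induction n generalizing J with
  | zero =>
    rw [Reach] at hJ
    subst hJ
    refine ⟨id, ?_, ?_, ?_⟩
    · simp [toInstance, input]
    · simp [toInstance, input]
    · intro i hi
      simp [toInstance, input]
      omega
  | succ n ih =>
    obtain ⟨J1, J2, h1, h2, h3⟩ := hJ
    obtain ⟨h, c1, c2, c3⟩ := ih J1 h1
    have hle : Instance.le J1 J := le_trans' h2.1 h3.1
    obtain ⟨ν', e1, e2⟩ := h2.2.1 rS (by simp [G1]) (asg [h (k + n), h (k + n + 1)]) (by
      have := h2.1 _ (c3 (k + n) (by omega))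
      simpa [rS, holdsAtom, asg] using this)
    have e3 : ν' 1 = h (k + n + 1) := by
      rw [e1 1 (by simp [TGD.bodyVar, rS])]; simp [asg]
    have e4 : [h (k + n + 1), ν' 2] ∈ J 0 := by
      have h5 : [ν' 1, ν' 2] ∈ J2 10 := by simpa [rS, holdsAtom] using e2
      have := fire (full_copy (copy2 0) (by simp [G2])) (h3.2.1 (copy2 0) (by simp [G2]))
        (asg [ν' 1, ν' 2]) (by simpa [copy2, holdsAtom, asg] using h3.1 _ h5)
      rw [← e3]
      simpa [copy2, holdsAtom, asg] using this
    refine ⟨fun i => if i ≤ k + n + 1 then h i else ν' 2, ?_, ?_, ?_⟩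
    · simpa using hle _ c1
    · have : k ≤ k + n + 1 := by omega
      simpa [this] using hle _ c2
    · intro i hi
      by_cases hik : i < k + n + 1
      · have h6 : i ≤ k + n + 1 := by omega
        have h7 : i + 1 ≤ k + n + 1 := by omega
        simp only [h6, h7, if_true]
        exact hle _ (c3 i (by omega))
      · have : i = k + n + 1 := by omega
        subst this
        simpa using e4

theorem ready_iff (e : Code) :
    (e.eval 0).Dom ↔ ∃ seq : List (List TGD), (∀ Γ ∈ seq, Γ ∈ PiL) ∧
      ∀ J ∈ safeSeqOutcomes seq (toInstance (input (Code.encodeCode e))), satTGD J sig := by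
  constructor
  · intro h
    obtain ⟨m, hm⟩ := Part.dom_iff_mem.1 h
    obtain ⟨n, hn⟩ := d_eval e.encodeCode e 0 m hm
    refine ⟨rounds (n + n), rounds_mem _, fun J hJ ν _ => ?_⟩
    obtain ⟨K, hK, hKJ⟩ := (rounds_reach _ _ _ hJ).split
    obtain ⟨f, hf⟩ := chain_exists _ _ _ hK
    have h1 := hn K f (hf.mono (by omega)) J hKJ
    have h2 := hKJ.le _ hf.1
    have h3 := hKJ.le _ hf.2.1
    refine ⟨asg [f e.encodeCode, f 0, f m], ?_, ?_⟩
    · simp [TGD.bodyVar, sig]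
    · simp only [List.map_cons, List.map_nil] at h1
      simp [sig, holdsAtom, asg, h1, h2, h3]
  · rintro ⟨seq, hs, h⟩
    obtain ⟨J, hJ, hJM⟩ := exists_seq_outcome (model_sat e.encodeCode) seq hs _
      (input_le_model e.encodeCode)
    obtain ⟨ν, -, hν⟩ := h J hJ (fun _ => 0) (by simp [sig])
    have h1 : ∀ a ∈ sig.head, holdsAtom (model e.encodeCode) ν a := fun a ha => hJM _ (hν a ha)
    simp [sig, holdsAtom, model] at h1
    obtain ⟨h2, h3, h4⟩ := h1
    rw [h2, h3, ofNat_encodeCode] at h4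
    exact Part.dom_iff_mem.2 ⟨_, h4⟩

theorem input_computable : Computable input := by
  apply Primrec.to_comp
  unfold input
  refine Primrec.list_cons.comp
    (Primrec.pair (Primrec.const 6) (Primrec.list_cons.comp Primrec.id (Primrec.const [])))
    (Primrec.list_cons.comp (Primrec.const _) ?_)
  refine Primrec.list_map (Primrec.list_range.comp Primrec.succ) ?_
  refine Primrec.pair (Primrec.const 0) (Primrec.list_cons.comp Primrec.snd
    (Primrec.list_cons.comp (Primrec.succ.comp Primrec.snd) (Primrec.const [])))

end CR

/-- Constraint readiness is undecidable: there are a finite set `Π` of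
procedures with safe scope (given by their acyclic tgd postconditions) and a
single acyclic tgd `σ` such that no algorithm decides, given a finite instance
`I`, whether some finite sequence of procedures from `Π` yields an outcome set
all of whose instances satisfy `σ`. -/
theorem constraint_readiness_undecidable :
    ∃ (Pi : List (List TGD)) (σ : TGD),
      (∀ Γ ∈ Pi, AcyclicTGDs Γ) ∧
      (∀ a ∈ σ.body, ∀ b ∈ σ.head, a.rel ≠ b.rel) ∧
      ¬ ComputablePred (fun L : FinInst =>
          ∃ seq : List (List TGD), (∀ Γ ∈ seq, Γ ∈ Pi) ∧
            ∀ J ∈ safeSeqOutcomes seq (toInstance L), satTGD J σ) := by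
  refine ⟨CR.PiL, CR.sig, ?_, ?_, ?_⟩
  · intro Γ h
    simp only [CR.PiL, List.mem_cons, List.not_mem_nil, or_false] at h
    rcases h with rfl | rfl
    · exact CR.acyclic_G1
    · exact CR.acyclic_G2
  · simp [CR.sig]
  · intro h
    refine ComputablePred.halting_problem 0 (ComputablePred.computable_of_manyOneReducible ?_ h)
    exact ⟨fun e => CR.input (Encodable.encode e), CR.input_computable.comp Computable.encode,
      fun e => CR.ready_iff e⟩
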